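/- Let R, K ∈ ℕ, let v₁,…,v_R ∈ ℂ satisfy v_j ≠ i for all j and v_j − v_k + 2i ≠ 0 for all 1 ≤ j < k ≤ R, and let δ₁,…,δ_K ∈ ℂ satisfy δ_j − δ_k + 2i ≠ 0 for all 1 ≤ j < k ≤ K. Fix integers x₁ < x₂ < ⋯ < x_{R+K}. Then, as Λ → +∞ along the reals, the Bethe ansatz wavefunction f_{R+K}(x₁,…,x_{R+K}; v₁,…,v_R, Λ+δ₁,…,Λ+δ_K) (which is well-defined for all sufficiently large Λ) converges to C_K · Σ_{1≤j₁<⋯<j_R≤R+K} f_R(x_{j₁},…,x_{j_R}; v₁,…,v_R), where C_K = Σ_{Q ∈ S_K} A_K(Q)[δ₁,…,δ_K] (Proposition III.2). -/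

import Mathlib

open Finset
open scoped Classical

/-- The Bethe amplitude `A_M(P)[v₁,…,v_M] = ε(P) · ∏_{j<k} (v_{Pj} − v_{Pk} + 2i)/(v_j − v_k + 2i)`. -/
noncomputable def betheAmp (M : ℕ) (v : Fin M → ℂ) (P : Equiv.Perm (Fin M)) : ℂ :=
  (Equiv.Perm.sign P : ℤ) *
    ∏ jk ∈ univ.filter (fun jk : Fin M × Fin M => jk.1 < jk.2),
      (v (P jk.1) - v (P jk.2) + 2 * Complex.I) / (v jk.1 - v jk.2 + 2 * Complex.I)

/-- The Bethe ansatz wavefunction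
`f_M(x₁,…,x_M; v₁,…,v_M) = Σ_{P ∈ S_M} A_M(P)[v] · ∏_j ((v_{Pj}+i)/(v_{Pj}−i))^{x_j}`
at integer coordinates. -/
noncomputable def betheWF (M : ℕ) (v : Fin M → ℂ) (x : Fin M → ℤ) : ℂ :=
  ∑ P : Equiv.Perm (Fin M), betheAmp M v P *
    ∏ j : Fin M, ((v (P j) + Complex.I) / (v (P j) - Complex.I)) ^ (x j)

open Filter Topology

noncomputable def bPhi (x y : ℂ) : ℂ := -((y - x + 2 * Complex.I) / (x - y + 2 * Complex.I))

noncomputable def bT (p : Prop) (z : ℂ) : ℂ := if p then z else 1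

lemma bT_false (z : ℂ) : bT False z = 1 := by simp [bT]

noncomputable def bG {α : Type*} [LT α] (M : ℕ) (v : Fin M → ℂ) (q : Fin M → α) : ℂ :=
  ∏ a, ∏ b, bT (a < b ∧ q b < q a) (bPhi (v a) (v b))

lemma b_prod_pairs (M : ℕ) (H : Fin M → Fin M → ℂ) (hd : ∀ a, H a a = 1) :
    ∏ a, ∏ b, H a b = ∏ a, ∏ b, if a < b then H a b * H b a else 1 := by
  have h1 : ∀ a b, H a b = (if a < b then H a b else 1) * (if b < a then H a b else 1) := by
    intro a b
    rcases lt_trichotomy a b with h | h | h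
    · simp [h, h.not_gt]
    · subst h; simp [hd]
    · simp [h, h.not_gt]
  have h2 : ∏ a, ∏ b, H a b = (∏ a, ∏ b, if a < b then H a b else 1) *
      (∏ a, ∏ b, if b < a then H a b else 1) := by
    simp_rw [← Finset.prod_mul_distrib]
    exact Finset.prod_congr rfl fun a _ => Finset.prod_congr rfl fun b _ => h1 a b
  rw [h2, Finset.prod_comm (f := fun a b => if b < a then H a b else 1)]
  simp_rw [← Finset.prod_mul_distrib]
  refine Finset.prod_congr rfl fun a _ => Finset.prod_congr rfl fun b _ => ?_
  split_ifs <;> simp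

lemma b_amp (M : ℕ) (v : Fin M → ℂ) (P : Equiv.Perm (Fin M))
    (hv : ∀ j k : Fin M, j < k → v j - v k + 2 * Complex.I ≠ 0) :
    betheAmp M v P = bG M v (P⁻¹ : Equiv.Perm (Fin M)) := by
  have hnum : ∏ jk ∈ univ.filter (fun jk : Fin M × Fin M => jk.1 < jk.2),
      (v (P jk.1) - v (P jk.2) + 2 * Complex.I) =
      ∏ a, ∏ b, if a < b then (if P⁻¹ a < P⁻¹ b then v a - v b + 2 * Complex.I
        else v b - v a + 2 * Complex.I) else 1 := by
    have e1 : ∏ jk ∈ univ.filter (fun jk : Fin M × Fin M => jk.1 < jk.2),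
      (v (P jk.1) - v (P jk.2) + 2 * Complex.I) =
      ∏ a, ∏ b, if P⁻¹ a < P⁻¹ b then v a - v b + 2 * Complex.I else 1 := by
      rw [Finset.prod_filter, Fintype.prod_prod_type]
      rw [← Equiv.prod_comp P (fun a => ∏ b, if P⁻¹ a < P⁻¹ b then _ else _)]
      refine Finset.prod_congr rfl fun a _ => ?_
      rw [← Equiv.prod_comp P (fun b => if P⁻¹ (P a) < P⁻¹ b then _ else _)]
      refine Finset.prod_congr rfl fun b _ => ?_
      simp
    rw [e1, b_prod_pairs _ _ (by simp)]
    refine Finset.prod_congr rfl fun a _ => Finset.prod_congr rfl fun b _ => ?_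
    by_cases hab : a < b
    · have hne : P⁻¹ a ≠ P⁻¹ b := fun h => hab.ne (P⁻¹.injective h)
      rcases lt_or_gt_of_ne hne with h | h
      · simp only [hab, h, h.not_gt, if_true, if_false, mul_one]
      · simp only [hab, h, h.not_gt, if_true, if_false, one_mul]
    · simp only [hab, if_false]
  have hden : ∏ jk ∈ univ.filter (fun jk : Fin M × Fin M => jk.1 < jk.2),
      (v jk.1 - v jk.2 + 2 * Complex.I) =
      ∏ a, ∏ b, if a < b then v a - v b + 2 * Complex.I else 1 := by
    rw [Finset.prod_filter, Fintype.prod_prod_type]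
  have hsign : (((Equiv.Perm.sign P : ℤˣ) : ℤ) : ℂ) =
      ∏ a, ∏ b, if a < b then (if P⁻¹ a < P⁻¹ b then (1:ℂ) else -1) else 1 := by
    rw [← Equiv.Perm.sign_inv, Equiv.Perm.sign_eq_prod_prod_Ioi]
    push_cast
    refine Finset.prod_congr rfl fun a _ => ?_
    rw [← Finset.prod_filter]
    refine Finset.prod_congr (by ext; simp) fun b _ => ?_
    split_ifs <;> simp
  unfold betheAmp bG
  rw [Finset.prod_div_distrib, hnum, hden, hsign]
  simp_rw [← Finset.prod_div_distrib, ← Finset.prod_mul_distrib]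
  refine Finset.prod_congr rfl fun a _ => Finset.prod_congr rfl fun b _ => ?_
  by_cases hab : a < b
  · have hne : P⁻¹ a ≠ P⁻¹ b := fun h => hab.ne (P⁻¹.injective h)
    rcases lt_or_gt_of_ne hne with h | h
    · simp only [hab, h, h.not_gt, if_true, if_false, and_false, one_mul, bT]
      exact div_self (hv a b hab)
    · simp only [hab, h, h.not_gt, if_true, if_false, and_true, bPhi, bT]
      ring
  · simp only [hab, if_false, false_and, bT]
    simp

lemma b_wf (M : ℕ) (v : Fin M → ℂ) (x : Fin M → ℤ)
    (hv : ∀ j k : Fin M, j < k → v j - v k + 2 * Complex.I ≠ 0) :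
    betheWF M v x = ∑ q : Equiv.Perm (Fin M), bG M v q *
      ∏ a, ((v a + Complex.I) / (v a - Complex.I)) ^ (x (q a)) := by
  unfold betheWF
  rw [← Equiv.sum_comp (Equiv.inv (Equiv.Perm (Fin M)))]
  refine Finset.sum_congr rfl fun q _ => ?_
  rw [b_amp M v _ hv]
  congr 1
  rw [← Equiv.prod_comp q]
  simp

lemma b_ratio (a b : ℂ) :
    Tendsto (fun Λ : ℝ => ((Λ : ℂ) + a) / ((Λ : ℂ) + b)) atTop (𝓝 1) ∧
    ∀ᶠ Λ : ℝ in atTop, (Λ : ℂ) + b ≠ 0 := by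
  have h0 : Tendsto (fun Λ : ℝ => (Λ : ℂ) + b) atTop (Bornology.cobounded ℂ) :=
    (tendsto_add_const_cobounded b).comp (RCLike.tendsto_ofReal_atTop_cobounded ℂ)
  have hne : ∀ᶠ Λ : ℝ in atTop, (Λ : ℂ) + b ≠ 0 := by
    have := h0.eventually (Bornology.isBounded_def.1 (Bornology.isBounded_singleton (x := (0:ℂ))))
    exact this
  refine ⟨?_, hne⟩
  have h1 := ((tendsto_inv₀_cobounded.comp h0).const_mul (a - b)).const_add (1:ℂ)
  simp only [mul_zero, add_zero] at h1
  refine h1.congr' ?_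
  filter_upwards [hne] with Λ h
  simp only [Function.comp]
  field_simp
  ring

lemma b_lim (R K : ℕ) (v : Fin R → ℂ) (δ : Fin K → ℂ) (x : Fin (R + K) → ℤ)
    (q : Equiv.Perm (Fin (R + K))) :
    Tendsto (fun Λ : ℝ =>
      bG (R + K) (Fin.addCases (motive := fun _ => ℂ) v (fun j => (Λ : ℂ) + δ j)) q *
      ∏ a, ((Fin.addCases (motive := fun _ => ℂ) v (fun j => (Λ : ℂ) + δ j) a + Complex.I) /
        (Fin.addCases (motive := fun _ => ℂ) v (fun j => (Λ : ℂ) + δ j) a - Complex.I)) ^ (x (q a)))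
      atTop
      (𝓝 (bG R v (fun a => q (Fin.castAdd K a)) * bG K δ (fun a => q (Fin.natAdd R a)) *
        ∏ a, ((v a + Complex.I) / (v a - Complex.I)) ^ (x (q (Fin.castAdd K a))))) := by
  refine Tendsto.mul ?_ ?_
  · unfold bG
    simp only [Fin.prod_univ_add, Fin.addCases_left, Fin.addCases_right]
    have hL : ∀ i j : Fin R, (Fin.castAdd K i < Fin.castAdd K j) ↔ i < j := by
      intro i j; simp only [Fin.lt_def, Fin.val_natAdd, Fin.val_castAdd]; try omega
    have hRR : ∀ i j : Fin K, (Fin.natAdd R i < Fin.natAdd R j) ↔ i < j := by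
      intro i j; simp only [Fin.lt_def, Fin.val_natAdd, Fin.val_castAdd]; try omega
    have hRL : ∀ (i : Fin K) (j : Fin R), (Fin.natAdd R i < Fin.castAdd K j) ↔ False := by
      intro i j; simp only [Fin.lt_def, Fin.val_natAdd, Fin.val_castAdd, iff_false]; have := j.2; omega
    simp only [hL, hRR, hRL, false_and, bT_false, Finset.prod_const_one, one_mul]
    refine Tendsto.mul ?_ ?_
    · refine tendsto_finsetProd _ fun a _ => ?_
      nth_rewrite 2 [← mul_one (∏ b, _)]
      refine Tendsto.mul tendsto_const_nhds ?_
      rw [← Finset.prod_const_one (s := (univ : Finset (Fin K)))]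
      refine tendsto_finsetProd _ fun b _ => ?_
      unfold bT
      split_ifs
      · refine (b_ratio (δ b - v a + 2 * Complex.I) (δ b - v a - 2 * Complex.I)).1.congr fun Λ => ?_
        unfold bPhi
        rw [← div_neg]
        congr 1 <;> ring
      · exact tendsto_const_nhds
    · have : ∀ (Λ : ℝ) a b, bPhi (Λ + δ a) (Λ + δ b) = bPhi (δ a) (δ b) := by
        intro Λ a b; simp [bPhi]
      simp only [this]
      exact tendsto_const_nhds
  · simp only [Fin.prod_univ_add, Fin.addCases_left, Fin.addCases_right]
    nth_rewrite 2 [← mul_one (∏ b, _)]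
    refine Tendsto.mul tendsto_const_nhds ?_
    rw [← Finset.prod_const_one (s := (univ : Finset (Fin K)))]
    refine tendsto_finsetProd _ fun b _ => ?_
    have h := (b_ratio (δ b + Complex.I) (δ b - Complex.I)).1.zpow₀ (x (q (Fin.natAdd R b)))
      (Or.inl one_ne_zero)
    rw [one_zpow] at h
    refine h.congr fun Λ => ?_
    congr 2 <;> ring

lemma b_E (R K : ℕ) (s : Fin R → Fin (R + K)) (hs : StrictMono s) :
    ∃ E : Fin R ⊕ Fin K ≃ Fin (R + K),
      (∀ i, E (Sum.inl i) = s i) ∧ StrictMono (fun i => E (Sum.inr i)) := by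
  have hm : (univ.image s).card = R := by
    rw [Finset.card_image_of_injective _ hs.injective]; simp
  have hn : (univ.image s)ᶜ.card = K := by
    rw [Finset.card_compl, hm]; simp
  refine ⟨finSumEquivOfFinset hm hn, fun i => ?_, fun i j hij => ?_⟩
  · rw [finSumEquivOfFinset_inl, ← Finset.orderEmbOfFin_unique hm (by simp) hs]
  · simpa using hij

lemma b_sum (R K : ℕ) (F : (Fin R → Fin (R + K)) → ℂ) (G : (Fin K → Fin (R + K)) → ℂ)
    (G' : (Fin K → Fin K) → ℂ)
    (hG : ∀ (t : Fin K → Fin (R + K)) (τ : Fin K → Fin K), StrictMono t → G (t ∘ τ) = G' τ) :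
    ∑ q : Equiv.Perm (Fin (R + K)), F (fun a => q (Fin.castAdd K a)) *
        G (fun a => q (Fin.natAdd R a)) =
      (∑ τ : Equiv.Perm (Fin K), G' τ) *
        ∑ s ∈ univ.filter (fun s : Fin R → Fin (R + K) => StrictMono s),
          ∑ σ : Equiv.Perm (Fin R), F (s ∘ σ) := by
  choose E hE1 hE2 using fun s : {s : Fin R → Fin (R + K) // StrictMono s} => b_E R K s.1 s.2
  let Φ : (Equiv.Perm (Fin K)) × {s : Fin R → Fin (R + K) // StrictMono s} ×
      (Equiv.Perm (Fin R)) → Equiv.Perm (Fin (R + K)) := fun p =>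
    finSumFinEquiv.symm.trans ((Equiv.Perm.sumCongr p.2.2 p.1).trans (E p.2.1))
  have hΦ1 : ∀ p a, Φ p (Fin.castAdd K a) = p.2.1.1 (p.2.2 a) := by
    intro p a; simp [Φ, hE1]
  have hΦ2 : ∀ p a, Φ p (Fin.natAdd R a) = E p.2.1 (Sum.inr (p.1 a)) := by
    intro p a; simp [Φ]
  have hbij : Function.Bijective Φ := by
    constructor
    · rintro ⟨τ, s, σ⟩ ⟨τ', s', σ'⟩ h
      have h1 : ∀ a, s.1 (σ a) = s'.1 (σ' a) := by
        intro a
        have := hΦ1 ⟨τ, s, σ⟩ a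
        rw [h, hΦ1] at this
        exact this.symm
      have hs : s = s' := by
        apply Subtype.ext
        rw [← s.2.range_inj s'.2, ← σ.surjective.range_comp s.1, ← σ'.surjective.range_comp s'.1]
        congr 1
        exact funext h1
      subst hs
      have hσ : σ = σ' := Equiv.ext fun a => s.2.injective (h1 a)
      have hτ : τ = τ' := by
        refine Equiv.ext fun a => ?_
        have := hΦ2 ⟨τ, s, σ⟩ a
        rw [h, hΦ2] at this
        exact (Sum.inr_injective ((E s).injective this)).symm
      rw [hσ, hτ]
    · intro q
      let S : Finset (Fin (R + K)) := univ.image (fun a => q (Fin.castAdd K a))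
      have hS : S.card = R := by
        refine (Finset.card_image_of_injective _ (q.injective.comp (Fin.castAdd_injective R K))).trans ?_
        simp
      let s : {s : Fin R → Fin (R + K) // StrictMono s} :=
        ⟨S.orderEmbOfFin hS, (S.orderEmbOfFin hS).strictMono⟩
      let r : Equiv.Perm (Fin R ⊕ Fin K) := (finSumFinEquiv.trans q).trans (E s).symm
      have hr : Set.MapsTo r (Set.range Sum.inl) (Set.range Sum.inl) := by
        rintro _ ⟨a, rfl⟩
        have : q (Fin.castAdd K a) ∈ Set.range (S.orderEmbOfFin hS) := by
          rw [Finset.range_orderEmbOfFin]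
          simp [S]
        obtain ⟨b, hb⟩ := this
        refine ⟨b, ?_⟩
        simp only [r, Equiv.trans_apply, finSumFinEquiv_apply_left]
        rw [← hb, Equiv.eq_symm_apply, hE1]
      obtain ⟨⟨σ, τ⟩, hst⟩ := Equiv.Perm.mem_sumCongrHom_range_of_perm_mapsTo_inl hr
      refine ⟨⟨τ, s, σ⟩, ?_⟩
      rw [Equiv.Perm.sumCongrHom_apply] at hst
      simp only at hst
      simp only [Φ, hst]
      ext y
      simp [r]
  rw [← (Equiv.ofBijective Φ hbij).sum_comp, Fintype.sum_prod_type, Finset.sum_mul]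
  refine Finset.sum_congr rfl fun τ _ => ?_
  rw [Fintype.sum_prod_type, Finset.mul_sum,
    ← Finset.sum_subtype_eq_sum_filter, Finset.subtype_univ]
  refine Finset.sum_congr rfl fun s _ => ?_
  rw [Finset.mul_sum]
  refine Finset.sum_congr rfl fun σ _ => ?_
  simp only [Equiv.ofBijective_apply, hΦ1, hΦ2]
  rw [mul_comm, ← hG _ τ (hE2 s)]
  rfl

lemma bG_comp {α β : Type*} [LinearOrder α] [Preorder β] (M : ℕ) (v : Fin M → ℂ)
    (t : α → β) (ht : StrictMono t) (q : Fin M → α) : bG M v (t ∘ q) = bG M v q := by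
  unfold bG
  simp only [Function.comp, ht.lt_iff_lt]

/-- Proposition III.2: as `Λ → +∞` along the reals, the Bethe ansatz wavefunction with
rapidities `v₁,…,v_R, Λ+δ₁,…,Λ+δ_K` at fixed increasing integer coordinates
`x₁ < ⋯ < x_{R+K}` converges to
`C_K · Σ_{j₁<⋯<j_R} f_R(x_{j₁},…,x_{j_R}; v₁,…,v_R)` with
`C_K = Σ_{Q ∈ S_K} A_K(Q)[δ₁,…,δ_K]`. -/
theorem prop_III_2 (R K : ℕ)
    (v : Fin R → ℂ) (δ : Fin K → ℂ)
    (hvI : ∀ j, v j ≠ Complex.I)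
    (hv : ∀ j k : Fin R, j < k → v j - v k + 2 * Complex.I ≠ 0)
    (hδ : ∀ j k : Fin K, j < k → δ j - δ k + 2 * Complex.I ≠ 0)
    (x : Fin (R + K) → ℤ) (hx : StrictMono x) :
    Filter.Tendsto
      (fun Λ : ℝ => betheWF (R + K)
        (Fin.addCases (motive := fun _ => ℂ) v (fun j => (Λ : ℂ) + δ j)) x)
      Filter.atTop
      (nhds ((∑ Q : Equiv.Perm (Fin K), betheAmp K δ Q) *
        ∑ s ∈ univ.filter (fun s : Fin R → Fin (R + K) => StrictMono s),
          betheWF R v (fun m => x (s m)))) := by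
  have hlim := tendsto_finsetSum (univ : Finset (Equiv.Perm (Fin (R + K))))
    fun q _ => b_lim R K v δ x q
  have hR : ∀ y, betheWF R v y = _ := fun y => b_wf R v y hv
  have hval : (∑ Q : Equiv.Perm (Fin K), betheAmp K δ Q) *
        ∑ s ∈ univ.filter (fun s : Fin R → Fin (R + K) => StrictMono s),
          betheWF R v (fun m => x (s m)) =
      ∑ q : Equiv.Perm (Fin (R + K)),
        bG R v (fun a => q (Fin.castAdd K a)) * bG K δ (fun a => q (Fin.natAdd R a)) *
        ∏ a, ((v a + Complex.I) / (v a - Complex.I)) ^ (x (q (Fin.castAdd K a))) := by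
    have h := b_sum R K (fun p => bG R v p *
      ∏ a, ((v a + Complex.I) / (v a - Complex.I)) ^ (x (p a))) (bG K δ) (bG K δ)
      (fun t τ ht => bG_comp K δ t ht τ)
    have e1 : ∑ Q : Equiv.Perm (Fin K), betheAmp K δ Q =
        ∑ τ : Equiv.Perm (Fin K), bG K δ τ := by
      rw [← Equiv.sum_comp (Equiv.inv (Equiv.Perm (Fin K)))]
      refine Finset.sum_congr rfl fun q _ => ?_
      rw [b_amp K δ _ hδ]
      simp
    have e2 : ∑ s ∈ univ.filter (fun s : Fin R → Fin (R + K) => StrictMono s),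
          betheWF R v (fun m => x (s m)) =
        ∑ s ∈ univ.filter (fun s : Fin R → Fin (R + K) => StrictMono s),
          ∑ σ : Equiv.Perm (Fin R), bG R v (s ∘ σ) *
            ∏ a, ((v a + Complex.I) / (v a - Complex.I)) ^ (x ((s ∘ σ) a)) := by
      refine Finset.sum_congr rfl fun s hs => ?_
      rw [hR]
      refine Finset.sum_congr rfl fun σ _ => ?_
      rw [bG_comp R v s (Finset.mem_filter.1 hs).2]
      rfl
    rw [e1, e2, ← h]
    refine Finset.sum_congr rfl fun q _ => ?_
    ring
  rw [hval]
  refine hlim.congr' ?_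
  have hev : ∀ᶠ Λ : ℝ in atTop, ∀ (a : Fin R) (b : Fin K),
      (Λ : ℂ) + (δ b - v a - 2 * Complex.I) ≠ 0 :=
    eventually_all.2 fun a => eventually_all.2 fun b => (b_ratio 0 _).2
  filter_upwards [hev] with Λ hΛ
  rw [b_wf]
  intro j k
  refine Fin.addCases (fun j => ?_) (fun j => ?_) j <;>
    refine Fin.addCases (fun k => ?_) (fun k => ?_) k <;> intro hjk <;>
    simp only [Fin.addCases_left, Fin.addCases_right]
  · exact hv j k (by simp only [Fin.lt_def, Fin.val_natAdd, Fin.val_castAdd] at hjk ⊢; omega)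
  · intro h
    apply hΛ j k
    linear_combination -h
  · simp only [Fin.lt_def, Fin.val_natAdd, Fin.val_castAdd] at hjk
    have := k.2
    omega
  · have := hδ j k (by simp only [Fin.lt_def, Fin.val_natAdd, Fin.val_castAdd] at hjk ⊢; omega)
    simpa using this
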